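/- For every pure-state classical-quantum channel x ↦ S_x = |ψ_x⟩⟨ψ_x| with finite input alphabet X and every probability distribution P on X, the constant-composition sphere packing exponent at the rate R_∞(P) satisfies E_sp^cc(R_∞(P), P) ≤ R_∞(P). -/

import Mathlib

open scoped BigOperators ComplexOrder
noncomputable section

namespace SPB

/-- `-log t` with the convention that it is `+∞` for `t ≤ 0`. -/
def negLog (t : ℝ) : EReal := if t ≤ 0 then (⊤ : EReal) else ((-Real.log t : ℝ) : EReal)

/-- Power of a positive semidefinite (more generally Hermitian) matrix by functional calculus
on the eigenvalues, with the convention `0 ^ r = 0` (so `A ^ 0` is the projection onto the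
range of `A`). -/
def mpow {ι : Type*} [Fintype ι] [DecidableEq ι] (A : Matrix ι ι ℂ) (r : ℝ) :
    Matrix ι ι ℂ :=
  if hA : A.IsHermitian then
    (hA.eigenvectorUnitary : Matrix ι ι ℂ) *
      Matrix.diagonal (fun i => ((if hA.eigenvalues i = 0 then (0 : ℝ)
        else hA.eigenvalues i ^ r : ℝ) : ℂ)) *
      (star (hA.eigenvectorUnitary : Matrix ι ι ℂ))
  else 0

/-- A density operator: positive semidefinite with trace one. -/
def IsDensity {ι : Type*} [Fintype ι] [DecidableEq ι] (A : Matrix ι ι ℂ) : Prop :=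
  A.PosSemidef ∧ A.trace = 1

/-- A probability distribution on a finite alphabet. -/
def IsProbDist {X : Type*} [Fintype X] (P : X → ℝ) : Prop :=
  (∀ x, 0 ≤ P x) ∧ ∑ x, P x = 1

/-- The constant–composition sphere packing coefficient
`E₀^cc(ρ,P) = min_F -(1+ρ) ∑ₓ P(x) log Tr(Sₓ^{1/(1+ρ)} F^{ρ/(1+ρ)})`. -/
def E0cc {X : Type*} [Fintype X] {d : ℕ} (S : X → Matrix (Fin d) (Fin d) ℂ)
    (ρ : ℝ) (P : X → ℝ) : EReal :=
  ⨅ F : {F : Matrix (Fin d) (Fin d) ℂ // IsDensity F},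
    ((1 + ρ : ℝ) : EReal) *
      ∑ x, ((P x : ℝ) : EReal) *
        negLog ((Matrix.trace (mpow (S x) (1 / (1 + ρ)) * mpow F.1 (ρ / (1 + ρ)))).re)
/-- The pure state (rank-one projection) `|ψ⟩⟨ψ|` associated with a vector `ψ ∈ ℂ^d`. -/
def pureState {d : ℕ} (ψ : Fin d → ℂ) : Matrix (Fin d) (Fin d) ℂ :=
  Matrix.of fun i j => ψ i * (starRingEnd ℂ) (ψ j)

/-- The cutoff rate `R_∞(P) = min_F -∑ₓ P(x) log Tr(Sₓ F)` (for pure-state channels). -/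
def RinfPure {X : Type*} [Fintype X] {d : ℕ} (S : X → Matrix (Fin d) (Fin d) ℂ)
    (P : X → ℝ) : EReal :=
  ⨅ F : {F : Matrix (Fin d) (Fin d) ℂ // IsDensity F},
    ∑ x, ((P x : ℝ) : EReal) * negLog ((Matrix.trace (S x * F.1)).re)

/-- The sphere packing exponent `E_sp^cc(R, P) = sup_{ρ ≥ 0} (E₀^cc(ρ,P) - ρ R)`
(with an extended-real rate `R`). -/
def Espcc {X : Type*} [Fintype X] {d : ℕ} (S : X → Matrix (Fin d) (Fin d) ℂ)
    (R : EReal) (P : X → ℝ) : EReal :=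
  ⨆ ρ : {ρ : ℝ // 0 ≤ ρ}, E0cc S ρ.1 P - ((ρ.1 : ℝ) : EReal) * R

lemma negLog_anti {s t : ℝ} (h : s ≤ t) : negLog t ≤ negLog s := by
  unfold negLog
  by_cases hs : s ≤ 0
  · simp [hs]
  · have ht : ¬ t ≤ 0 := by linarith
    rw [if_neg hs, if_neg ht]
    exact_mod_cast neg_le_neg (Real.log_le_log (by linarith) h)

lemma negLog_nonneg {t : ℝ} (h : t ≤ 1) : 0 ≤ negLog t := by
  have h1 := negLog_anti h
  have : negLog 1 = 0 := by simp [negLog]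
  rwa [this] at h1

lemma herm_eq {d : ℕ} {F : Matrix (Fin d) (Fin d) ℂ} (hF : F.IsHermitian) :
    F = (hF.eigenvectorUnitary : Matrix (Fin d) (Fin d) ℂ) *
      Matrix.diagonal (fun i => ((hF.eigenvalues i : ℝ) : ℂ)) *
      (star (hF.eigenvectorUnitary : Matrix (Fin d) (Fin d) ℂ)) := by
  have := hF.spectral_theorem
  simpa [Unitary.conjStarAlgAut_apply, Function.comp_def] using this

lemma trace_pure {d : ℕ} (ψ : Fin d → ℂ) (U : Matrix (Fin d) (Fin d) ℂ) (f : Fin d → ℝ) :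
    (Matrix.trace (pureState ψ * (U * Matrix.diagonal (fun i => (f i : ℂ)) * star U))).re =
      ∑ i, f i * Complex.normSq ((star U).mulVec ψ i) := by
  have e : pureState ψ = Matrix.vecMulVec ψ (star ψ) := by
    ext i j; simp [pureState, Matrix.vecMulVec]
  have e2 : Matrix.trace (pureState ψ * (U * Matrix.diagonal (fun i => (f i : ℂ)) * star U))
      = ∑ i, ((f i * Complex.normSq ((star U).mulVec ψ i) : ℝ) : ℂ) := by
    rw [← Matrix.mul_assoc, Matrix.trace_mul_comm, ← Matrix.mul_assoc, ← Matrix.mul_assoc, e,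
      Matrix.mul_vecMulVec, Matrix.vecMulVec_mul, Matrix.trace]
    refine Finset.sum_congr rfl fun i _ => ?_
    have : Matrix.vecMul (star ψ) U = star ((star U).mulVec ψ) := by
      rw [Matrix.star_mulVec, Matrix.star_eq_conjTranspose, Matrix.conjTranspose_conjTranspose]
    simp only [Matrix.diag_apply, Matrix.mul_diagonal, Matrix.vecMulVec_apply, this, Pi.star_apply,
      Complex.ofReal_mul, Complex.normSq_eq_conj_mul_self, Complex.star_def]
    ring
  rw [e2, ← Complex.ofReal_sum, Complex.ofReal_re]

lemma sum_one {d : ℕ} (ψ : Fin d → ℂ) (hψ : ∑ i, Complex.normSq (ψ i) = 1)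
    (U : Matrix (Fin d) (Fin d) ℂ) (hU : U * star U = 1) :
    ∑ i, Complex.normSq ((star U).mulVec ψ i) = 1 := by
  have h := trace_pure ψ U (fun _ => 1)
  simp only [one_mul, Complex.ofReal_one, Matrix.diagonal_one, mul_one, hU] at h
  rw [← h, ← hψ]
  simp [pureState, Matrix.trace, Complex.mul_conj]

lemma mpow_pure {d : ℕ} (ψ : Fin d → ℂ) (hψ : ∑ i, Complex.normSq (ψ i) = 1) (r : ℝ) :
    mpow (pureState ψ) r = pureState ψ := by
  have hH : (pureState ψ).IsHermitian := by
    ext i j; simp [pureState, Matrix.conjTranspose, mul_comm]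
  have hsq : pureState ψ * pureState ψ = pureState ψ := by
    ext i j
    have : (∑ k, (starRingEnd ℂ) (ψ k) * ψ k) = 1 := by
      simp only [← Complex.normSq_eq_conj_mul_self]; exact_mod_cast hψ
    simp only [pureState, Matrix.mul_apply, Matrix.of_apply]
    calc _ = ∑ k, (ψ i * (starRingEnd ℂ) (ψ j)) * ((starRingEnd ℂ) (ψ k) * ψ k) :=
          Finset.sum_congr rfl fun k _ => by ring
      _ = _ := by rw [← Finset.mul_sum, this, mul_one]
  have hev : ∀ i, hH.eigenvalues i = 0 ∨ hH.eigenvalues i = 1 := by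
    intro i
    have h1 := hH.mulVec_eigenvectorBasis i
    have h2 : (pureState ψ).mulVec ((pureState ψ).mulVec ⇑(hH.eigenvectorBasis i)) =
      (pureState ψ).mulVec ⇑(hH.eigenvectorBasis i) := by rw [Matrix.mulVec_mulVec, hsq]
    rw [h1, Matrix.mulVec_smul, h1, smul_smul, ← sub_eq_zero, ← sub_smul] at h2
    rcases smul_eq_zero.1 h2 with h | h
    · have : hH.eigenvalues i * (hH.eigenvalues i - 1) = 0 := by linarith
      rcases mul_eq_zero.1 this with h | h
      · exact Or.inl h
      · right; linarith
    · exfalso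
      have := hH.eigenvectorBasis.toBasis.ne_zero i
      apply this
      ext j
      simpa using congrFun h j
  conv_rhs => rw [herm_eq hH]
  rw [mpow, dif_pos hH]
  congr 4
  ext i
  rcases hev i with h | h <;> simp [h]

lemma ev_nonneg {d : ℕ} {F : Matrix (Fin d) (Fin d) ℂ} (hF : IsDensity F) (i : Fin d) :
    0 ≤ hF.1.1.eigenvalues i := hF.1.eigenvalues_nonneg i

lemma ev_le_one {d : ℕ} {F : Matrix (Fin d) (Fin d) ℂ} (hF : IsDensity F) (i : Fin d) :
    hF.1.1.eigenvalues i ≤ 1 := by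
  have h : ∑ i, hF.1.1.eigenvalues i = 1 := by
    have h1 := hF.1.1.trace_eq_sum_eigenvalues
    have h2 := h1.symm.trans hF.2
    have h3 := congrArg Complex.re h2
    simpa using h3
  rw [← h]
  exact Finset.single_le_sum (fun j _ => ev_nonneg hF j) (Finset.mem_univ i)

lemma trace_le_one {d : ℕ} (ψ : Fin d → ℂ) (hψ : ∑ i, Complex.normSq (ψ i) = 1)
    {F : Matrix (Fin d) (Fin d) ℂ} (hF : IsDensity F) :
    (Matrix.trace (pureState ψ * F)).re ≤ 1 := by
  conv_lhs => rw [herm_eq hF.1.1]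
  rw [trace_pure, ← sum_one ψ hψ (hF.1.1.eigenvectorUnitary : Matrix (Fin d) (Fin d) ℂ)
    (Unitary.mul_star_self_of_mem hF.1.1.eigenvectorUnitary.2)]
  exact Finset.sum_le_sum fun i _ =>
    mul_le_of_le_one_left (Complex.normSq_nonneg _) (ev_le_one hF i)

lemma trace_le_mpow {d : ℕ} (ψ : Fin d → ℂ)
    {F : Matrix (Fin d) (Fin d) ℂ} (hF : IsDensity F) {r : ℝ} (hr : r ≤ 1) :
    (Matrix.trace (pureState ψ * F)).re ≤ (Matrix.trace (pureState ψ * mpow F r)).re := by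
  conv_lhs => rw [herm_eq hF.1.1]
  rw [mpow, dif_pos hF.1.1, trace_pure, trace_pure]
  refine Finset.sum_le_sum fun i _ => mul_le_mul_of_nonneg_right ?_ (Complex.normSq_nonneg _)
  split_ifs with h
  · exact h.le
  · have := Real.rpow_le_rpow_of_exponent_ge (lt_of_le_of_ne (ev_nonneg hF i) (Ne.symm h))
      (ev_le_one hF i) hr
    simpa using this

/-- **For pure-state channels, the constant-composition sphere packing exponent at the
cutoff rate satisfies** `E_sp^cc(R_∞(P),P) ≤ R_∞(P)`. -/
theorem Espcc_at_Rinf_le_Rinf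
    {X : Type*} [Fintype X] [DecidableEq X] {d : ℕ}
    (ψ : X → Fin d → ℂ) (hψ : ∀ x, ∑ i, Complex.normSq (ψ x i) = 1)
    (P : X → ℝ) (hP : IsProbDist P) :
    Espcc (fun x => pureState (ψ x)) (RinfPure (fun x => pureState (ψ x)) P) P ≤
      RinfPure (fun x => pureState (ψ x)) P := by
  have hR0 : 0 ≤ RinfPure (fun x => pureState (ψ x)) P := by
    refine le_iInf fun F => Finset.sum_nonneg fun x _ => ?_
    exact mul_nonneg (by exact_mod_cast hP.1 x) (negLog_nonneg (trace_le_one _ (hψ x) F.2))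
  refine iSup_le fun ρ => ?_
  obtain ⟨ρ, hρ⟩ := ρ
  have hpos : 0 < 1 + ρ := by linarith
  have key : E0cc (fun x => pureState (ψ x)) ρ P ≤
      ((1 + ρ : ℝ) : EReal) * RinfPure (fun x => pureState (ψ x)) P := by
    rw [← EReal.div_le_iff_le_mul (by exact_mod_cast hpos) (EReal.coe_ne_top _)]
    refine le_iInf fun F => ?_
    rw [EReal.div_le_iff_le_mul (by exact_mod_cast hpos) (EReal.coe_ne_top _)]
    refine (iInf_le _ F).trans ?_
    refine mul_le_mul_of_nonneg_left ?_ (by exact_mod_cast hpos.le)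
    refine Finset.sum_le_sum fun x _ => ?_
    refine mul_le_mul_of_nonneg_left ?_ (by exact_mod_cast hP.1 x)
    apply negLog_anti
    dsimp only
    rw [mpow_pure _ (hψ x)]
    exact trace_le_mpow _ F.2 ((div_le_one hpos).2 (by linarith))
  dsimp only
  generalize E0cc (fun x => pureState (ψ x)) ρ P = E at *
  generalize RinfPure (fun x => pureState (ψ x)) P = R at *
  induction R with
  | bot => simp at hR0
  | top => exact le_top
  | coe R =>
    induction E with
    | bot => simp [← EReal.coe_mul]
    | top => exact absurd (top_le_iff.1 key) (by rw [← EReal.coe_mul]; exact EReal.coe_ne_top _)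
    | coe E =>
      norm_cast at key ⊢
      linarith

end SPB
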